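/- arXiv:1207.5222 — 3 statements merged into one kernel-verified Lean document; each statement's English description precedes it below -/
import Mathlib

section
/- For every integer N ≥ 0, as λ → +∞ through real values, Γ(λ) = √(2π) λ^{λ−1/2} e^{−λ} ( Σ_{n=0}^{N−1} (−1)^n γ_n λ^{−n} + O(λ^{−N}) ), where γ_n are the Stirling coefficients; in particular γ_0 = 1, γ_1 = −1/12, γ_2 = 1/288. -/
open Finset

/-- The unsigned Stirling numbers of the first kind. -/
def stirling1 : ℕ → ℕ → ℕ
  | 0, 0 => 1
  | 0, _ + 1 => 0
  | _ + 1, 0 => 0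
  | n + 1, j + 1 => stirling1 n j + n * stirling1 n (j + 1)

/-- Generalized binomial coefficient `C(ρ, k) = ρ(ρ-1)⋯(ρ-k+1)/k!` for real `ρ`. -/
noncomputable def gbinomR (ρ : ℝ) (k : ℕ) : ℝ :=
  (∏ i ∈ Finset.range k, (ρ - i)) / (Nat.factorial k : ℝ)

/-- The formal power series `F(x) = 2(x - log(1+x))/x² = ∑_{m≥0} 2(-1)^m x^m/(m+2)`. -/
noncomputable def F : PowerSeries ℝ :=
  PowerSeries.mk fun m => 2 * (-1 : ℝ) ^ m / ((m : ℝ) + 2)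

/-- For real `ρ`, the formal power series `F^ρ := ∑_{k≥0} C(ρ,k) (F-1)^k`; since `F - 1`
has zero constant term, the coefficient of `x^n` only involves `k ≤ n`. -/
noncomputable def Fpow (ρ : ℝ) : PowerSeries ℝ :=
  PowerSeries.mk fun n =>
    ∑ k ∈ Finset.range (n + 1), gbinomR ρ k * PowerSeries.coeff n ((F - 1) ^ k)

/-- The `n`-th Stirling coefficient:
`γ_n = ((-1)^n (2n)!/(2^n n!)) · [x^{2n}] F^{-(n+1/2)}`. -/
noncomputable def stirlingCoeff (n : ℕ) : ℝ :=
  ((-1 : ℝ) ^ n * (Nat.factorial (2 * n) : ℝ) / (2 ^ n * (Nat.factorial n : ℝ))) *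
    PowerSeries.coeff (2 * n) (Fpow (-((n : ℝ) + 1 / 2)))

open Asymptotics Filter

/-!
For `l > 0` one has `Γ(l) = l ^ l * exp (-l) * ∫ x > -1, exp (-(l * f x))` with
`f x = x - log (1 + x) = (x² / 2) g x`, where `g` has the Taylor series `F` at `0`, so the
expansion is an instance of Laplace's method. Near `0` the integrand is a Gaussian `exp (-u)`,
`u = l x² / 2`, times `exp (-u (g x - 1))`. Expanding the second exponential in powers of
`g x - 1`, and these in powers of `x`, to sufficiently high order costs at most a multiple of
`l ^ (-N) (1 + u)⁻¹`, since the Gaussian absorbs powers of `u`; away from `0` the same bound holds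
up to the integrand itself, which is exponentially small in `l`. As a function of `x` the bound has
an integral of order `√(2π / l) l ^ (-N)`. The approximation is integrated exactly with the Gaussian
moments, and `(-1/2)ᵏ / k! * (2 (n + k) - 1)‼ = (2 n - 1)‼ * C(-(n + 1/2), k)` turns the resulting
coefficients into those of `F ^ (-(n + 1/2))`.
-/

section AsymptoticSeries

open scoped Topology PowerSeries

lemma eval_trunc_eq_sum {R : Type*} [Semiring R] (J : ℕ) (G : R⟦X⟧) (x : R) :
    (G.trunc J).eval x = ∑ i ∈ range J, PowerSeries.coeff i G * x ^ i :=
  PowerSeries.eval₂_trunc_eq_sum_range x (RingHom.id R) J G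

lemma X_pow_dvd_trunc_mul_trunc_sub {R : Type*} [CommRing R] (J : ℕ) (G H : R⟦X⟧) :
    Polynomial.X ^ J ∣ G.trunc J * H.trunc J - (G * H).trunc J := by
  rw [Polynomial.X_pow_dvd_iff]
  intro d hd
  rw [← PowerSeries.trunc_trunc_mul_trunc, ← Polynomial.coe_mul, Polynomial.coeff_sub,
    PowerSeries.coeff_trunc, if_pos hd, Polynomial.coeff_coe, sub_self]

variable {𝕜 : Type*} [NormedField 𝕜] {g h : 𝕜 → 𝕜} {G H : 𝕜⟦X⟧}

/-- The formal power series `G` is an asymptotic expansion of `g` at `0`, to every order. The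
neighbourhoods are punctured, so that the value of `g` at `0` is irrelevant. -/
def HasAsymptoticSeries (g : 𝕜 → 𝕜) (G : 𝕜⟦X⟧) : Prop :=
  ∀ J : ℕ, (fun x => g x - (G.trunc J).eval x) =O[𝓝[≠] 0] fun x => x ^ J

lemma isBigO_eval_one (p : Polynomial 𝕜) : (fun x => p.eval x) =O[𝓝[≠] 0] fun _ => (1 : 𝕜) :=
  ((p.continuous.tendsto 0).mono_left nhdsWithin_le_nhds).isBigO_one 𝕜

lemma exists_norm_eval_trunc_le (J : ℕ) (G : 𝕜⟦X⟧) {δ : ℝ} (hδ : 0 < δ) :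
    ∃ C, 0 ≤ C ∧ ∀ x : 𝕜, δ ≤ ‖x‖ → ‖(G.trunc J).eval x‖ ≤ C * ‖x‖ ^ J := by
  refine ⟨∑ i ∈ range J, ‖PowerSeries.coeff i G‖ / δ ^ (J - i),
    sum_nonneg fun i _ => by positivity, fun x hx => ?_⟩
  rw [eval_trunc_eq_sum, sum_mul]
  refine norm_sum_le_of_le _ fun i hi => ?_
  rw [norm_mul, norm_pow, div_mul_eq_mul_div, le_div_iff₀ (by positivity), mul_assoc,
    ← pow_mul_pow_sub ‖x‖ (mem_range.mp hi).le]
  gcongr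

namespace HasAsymptoticSeries

lemma one : HasAsymptoticSeries (fun _ : 𝕜 => 1) 1 := by
  intro J
  rcases J with _ | J
  · simpa using isBigO_refl (fun _ : 𝕜 => (1 : 𝕜)) (𝓝[≠] 0)
  · simpa using isBigO_zero (fun x : 𝕜 => x ^ (J + 1)) (𝓝[≠] 0)

lemma sub (hg : HasAsymptoticSeries g G) (hh : HasAsymptoticSeries h H) :
    HasAsymptoticSeries (fun x => g x - h x) (G - H) := fun J =>
  ((hg J).sub (hh J)).congr_left fun x => by rw [map_sub, Polynomial.eval_sub]; ring

lemma isBigO_one (hg : HasAsymptoticSeries g G) : g =O[𝓝[≠] 0] fun _ => (1 : 𝕜) := by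
  simpa using hg 0

lemma mul (hg : HasAsymptoticSeries g G) (hh : HasAsymptoticSeries h H) :
    HasAsymptoticSeries (fun x => g x * h x) (G * H) := by
  intro J
  obtain ⟨r, hr⟩ := X_pow_dvd_trunc_mul_trunc_sub J G H
  have hr_eval (x : 𝕜) : (G.trunc J).eval x * (H.trunc J).eval x - ((G * H).trunc J).eval x =
      x ^ J * r.eval x := by
    simpa using congrArg (Polynomial.eval x) hr
  have h₁ := hg.isBigO_one.mul (hh J)
  have h₂ := (hg J).mul (isBigO_eval_one (H.trunc J))
  have h₃ := (isBigO_refl (fun x : 𝕜 => x ^ J) (𝓝[≠] 0)).mul (isBigO_eval_one r)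
  simp only [one_mul, mul_one] at h₁ h₂ h₃
  refine ((h₁.add h₂).add h₃).congr_left fun x => ?_
  linear_combination -hr_eval x

lemma pow (hg : HasAsymptoticSeries g G) (k : ℕ) :
    HasAsymptoticSeries (fun x => g x ^ k) (G ^ k) := by
  induction k with
  | zero => simpa using one
  | succ k ih => simpa only [pow_succ] using ih.mul hg

lemma sub_constantCoeff_isBigO (hg : HasAsymptoticSeries g G) :
    (fun x => g x - PowerSeries.constantCoeff G) =O[𝓝[≠] 0] fun x => x := by
  simpa [eval_trunc_eq_sum] using hg 1

end HasAsymptoticSeries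

end AsymptoticSeries

section Estimates

open scoped Nat

lemma abs_exp_sub_sum_le_abs_pow_mul_exp (w : ℝ) (n : ℕ) :
    |Real.exp w - ∑ k ∈ range n, w ^ k / k !| ≤ |w| ^ n * Real.exp |w| := by
  have h := Complex.norm_exp_sub_sum_le_norm_mul_exp (w : ℂ) n
  rw [Complex.norm_real, Real.norm_eq_abs] at h
  rw [← Real.norm_eq_abs, ← Complex.norm_real]
  push_cast
  exact h

lemma abs_exp_neg_mul_one_add_sub_sum_le {u t : ℝ} (hu : 0 ≤ u) (ht : |t| ≤ 1 / 2) (n : ℕ) :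
    |Real.exp (-(u * (1 + t))) - Real.exp (-u) * ∑ k ∈ range n, (-u) ^ k / k ! * t ^ k| ≤
      (u * |t|) ^ n * Real.exp (-(u / 2)) := by
  have h_abs : |-u * t| = u * |t| := by rw [abs_mul, abs_neg, abs_of_nonneg hu]
  have h_factor : Real.exp (-(u * (1 + t))) -
        Real.exp (-u) * ∑ k ∈ range n, (-u) ^ k / k ! * t ^ k =
      Real.exp (-u) * (Real.exp (-u * t) - ∑ k ∈ range n, (-u * t) ^ k / k !) := by
    simp only [mul_sub, ← Real.exp_add, mul_pow, div_mul_eq_mul_div]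
    ring_nf
  rw [h_factor, abs_mul, Real.abs_exp]
  calc Real.exp (-u) * |Real.exp (-u * t) - ∑ k ∈ range n, (-u * t) ^ k / k !|
      ≤ Real.exp (-u) * ((u * |t|) ^ n * Real.exp (u * |t|)) := by
        rw [← h_abs]
        gcongr
        exact abs_exp_sub_sum_le_abs_pow_mul_exp _ _
    _ = (u * |t|) ^ n * Real.exp (-u + u * |t|) := by rw [Real.exp_add]; ring
    _ ≤ (u * |t|) ^ n * Real.exp (-(u / 2)) := by
        gcongr
        nlinarith

lemma pow_mul_exp_neg_le (b : ℕ) {c u : ℝ} (hc : 0 < c) (hu : 0 ≤ u) :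
    u ^ b * Real.exp (-(c * u)) ≤ b ! / c ^ b := by
  have h := Real.pow_div_factorial_le_exp (c * u) (by positivity) b
  rw [mul_pow, div_le_iff₀ (by positivity)] at h
  rw [Real.exp_neg, ← div_eq_mul_inv, div_le_div_iff₀ (by positivity) (by positivity)]
  linarith

lemma exists_pow_mul_exp_neg_le (b : ℕ) {c : ℝ} (hc : 0 < c) :
    ∃ C, 0 ≤ C ∧ ∀ u, 0 ≤ u → u ^ b * Real.exp (-(c * u)) ≤ C * (1 + u)⁻¹ := by
  refine ⟨b ! / c ^ b + (b + 1)! / c ^ (b + 1), by positivity, fun u hu => ?_⟩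
  rw [← div_eq_mul_inv, le_div_iff₀ (by positivity)]
  calc u ^ b * Real.exp (-(c * u)) * (1 + u)
      = u ^ b * Real.exp (-(c * u)) + u ^ (b + 1) * Real.exp (-(c * u)) := by ring
    _ ≤ b ! / c ^ b + (b + 1)! / c ^ (b + 1) :=
        add_le_add (pow_mul_exp_neg_le b hc hu) (pow_mul_exp_neg_le (b + 1) hc hu)

lemma abs_pow_two_mul_eq {l : ℝ} (hl : l ≠ 0) (x : ℝ) (N : ℕ) :
    |x| ^ (2 * N) = 2 ^ N * (l ^ N)⁻¹ * (l * x ^ 2 / 2) ^ N := by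
  rw [pow_mul, sq_abs, ← inv_pow, ← mul_pow, ← mul_pow]
  congr 1
  field_simp

-- In terms of `u = l x² / 2` the `k`-th summand is at most a multiple of `l ^ (-N) u ^ (k + N)`.
lemma exists_abs_exp_mul_sum_le {c : ℕ → ℝ} (hc : ∀ k, 0 ≤ c k) (K N : ℕ) :
    ∃ C, 0 ≤ C ∧ ∀ l x : ℝ, 0 < l → ∀ t : ℕ → ℝ,
        (∀ k ∈ range K, |t k| ≤ c k * |x| ^ (2 * N)) →
      |Real.exp (-(l * x ^ 2 / 2)) * ∑ k ∈ range K, (-(l * x ^ 2 / 2)) ^ k / k ! * t k| ≤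
        C * ((l ^ N)⁻¹ * (1 + l * x ^ 2 / 2)⁻¹) := by
  choose D hD₀ hD using fun k => exists_pow_mul_exp_neg_le (k + N) one_pos
  refine ⟨∑ k ∈ range K, c k * 2 ^ N * D k,
    sum_nonneg fun k _ => mul_nonneg (mul_nonneg (hc k) (by positivity)) (hD₀ k),
    fun l x hl t ht => ?_⟩
  have hu : 0 ≤ l * x ^ 2 / 2 := by positivity
  simp only [abs_pow_two_mul_eq hl.ne'] at ht
  generalize l * x ^ 2 / 2 = u at hu ht ⊢
  rw [mul_sum, sum_mul]
  refine (abs_sum_le_sum_abs _ _).trans (sum_le_sum fun k hk => ?_)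
  have h_factorial : u ^ k / k ! ≤ u ^ k :=
    div_le_self (by positivity) (mod_cast k.factorial_pos)
  have hck := hc k
  calc |Real.exp (-u) * ((-u) ^ k / k ! * t k)|
      = Real.exp (-u) * (u ^ k / k ! * |t k|) := by
        rw [abs_mul, abs_mul, abs_div, abs_pow, abs_neg, abs_of_nonneg hu, Real.abs_exp,
          Nat.abs_cast]
    _ ≤ Real.exp (-u) * (u ^ k * (c k * (2 ^ N * (l ^ N)⁻¹ * u ^ N))) := by
        gcongr
        exact ht k hk
    _ = c k * 2 ^ N * (l ^ N)⁻¹ * (u ^ (k + N) * Real.exp (-(1 * u))) := by ring_nf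
    _ ≤ c k * 2 ^ N * (l ^ N)⁻¹ * (D k * (1 + u)⁻¹) :=
        mul_le_mul_of_nonneg_left (hD k u hu) (by positivity)
    _ = c k * 2 ^ N * D k * ((l ^ N)⁻¹ * (1 + u)⁻¹) := by ring

end Estimates

section GaussianMoments

open MeasureTheory
open scoped Nat PowerSeries

lemma integrable_pow_mul_exp_neg_mul_sq_div_two {l : ℝ} (hl : 0 < l) (j : ℕ) :
    Integrable fun x : ℝ => x ^ j * Real.exp (-(l * x ^ 2 / 2)) := by
  have h := integrable_rpow_mul_exp_neg_mul_sq (half_pos hl) (s := j)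
    (neg_one_lt_zero.trans_le j.cast_nonneg)
  refine h.congr (Eventually.of_forall fun x => ?_)
  simp only [Real.rpow_natCast]
  ring_nf

lemma integral_odd_pow_mul_exp_neg_mul_sq_div_two (l : ℝ) (n : ℕ) :
    ∫ x : ℝ, x ^ (2 * n + 1) * Real.exp (-(l * x ^ 2 / 2)) = 0 := by
  have h := integral_neg_eq_self
    (fun x : ℝ => x ^ (2 * n + 1) * Real.exp (-(l * x ^ 2 / 2))) volume
  simp only [Odd.neg_pow ⟨n, rfl⟩, neg_sq, neg_mul, integral_neg] at h
  linarith

lemma integral_Ioi_even_pow_mul_exp_neg_mul_sq_div_two {l : ℝ} (hl : 0 < l) (n : ℕ) :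
    ∫ x in Set.Ioi (0 : ℝ), x ^ (2 * n) * Real.exp (-(l * x ^ 2 / 2)) =
      (√(2 / l) / 2) * (2 / l) ^ n * Real.Gamma (n + 1 / 2) := by
  have h := integral_rpow_mul_exp_neg_mul_rpow (q := (2 * n : ℕ)) two_pos
    (neg_one_lt_zero.trans_le (Nat.cast_nonneg _)) (half_pos hl)
  have h_exponent : (((2 * n : ℕ) : ℝ) + 1) / 2 = n + 1 / 2 := by push_cast; ring
  have h_scale : (l / 2) ^ (-((n : ℝ) + 1 / 2)) = (2 / l) ^ n * √(2 / l) := by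
    rw [Real.rpow_neg (by positivity), ← Real.inv_rpow (by positivity), inv_div,
      Real.rpow_add (by positivity), Real.rpow_natCast, Real.sqrt_eq_rpow]
  rw [neg_div, h_exponent, h_scale] at h
  calc ∫ x in Set.Ioi (0 : ℝ), x ^ (2 * n) * Real.exp (-(l * x ^ 2 / 2))
      = ∫ x in Set.Ioi (0 : ℝ), x ^ ((2 * n : ℕ) : ℝ) * Real.exp (-(l / 2) * x ^ (2 : ℝ)) := by
        refine integral_congr_ae (Eventually.of_forall fun x => ?_)
        simp only [Real.rpow_natCast, Real.rpow_ofNat]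
        ring_nf
    _ = _ := by rw [h]; ring

lemma integral_even_pow_mul_exp_neg_mul_sq_div_two {l : ℝ} (hl : 0 < l) (n : ℕ) :
    ∫ x : ℝ, x ^ (2 * n) * Real.exp (-(l * x ^ 2 / 2)) =
      √(2 * Real.pi / l) * (2 * n - 1)‼ / l ^ n := by
  have h_abs := integral_comp_abs (f := fun x : ℝ => x ^ (2 * n) * Real.exp (-(l * x ^ 2 / 2)))
  simp only [(even_two_mul n).pow_abs, sq_abs] at h_abs
  rw [h_abs, integral_Ioi_even_pow_mul_exp_neg_mul_sq_div_two hl, Real.Gamma_nat_add_half,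
    mul_div_right_comm 2 Real.pi, Real.sqrt_mul (by positivity), div_pow]
  field_simp

lemma sum_range_two_mul {M : Type*} [AddCommMonoid M] (f : ℕ → M) (N : ℕ) :
    ∑ j ∈ range (2 * N), f j = ∑ n ∈ range N, (f (2 * n) + f (2 * n + 1)) := by
  induction N with
  | zero => simp
  | succ N ih => rw [mul_add_one, sum_range_succ, sum_range_succ, ih, sum_range_succ, add_assoc]

lemma pow_mul_trunc_mul_eq_sum (m J : ℕ) (G : ℝ⟦X⟧) (x c : ℝ) :
    x ^ m * (G.trunc J).eval x * c =
      ∑ j ∈ range J, PowerSeries.coeff j G * (x ^ (m + j) * c) := by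
  rw [eval_trunc_eq_sum, mul_sum, sum_mul]
  exact sum_congr rfl fun j _ => by ring

lemma integrable_pow_mul_trunc_mul_exp_neg_mul_sq_div_two {l : ℝ} (hl : 0 < l) (m J : ℕ)
    (G : ℝ⟦X⟧) :
    Integrable fun x : ℝ => x ^ m * (G.trunc J).eval x * Real.exp (-(l * x ^ 2 / 2)) := by
  simp only [pow_mul_trunc_mul_eq_sum]
  exact integrable_finsetSum _ fun j _ =>
    (integrable_pow_mul_exp_neg_mul_sq_div_two hl (m + j)).const_mul _

lemma integral_even_pow_mul_trunc_mul_exp_neg_mul_sq_div_two {l : ℝ} (hl : 0 < l) (k N : ℕ)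
    (G : ℝ⟦X⟧) :
    ∫ x : ℝ, x ^ (2 * k) * (G.trunc (2 * N)).eval x * Real.exp (-(l * x ^ 2 / 2)) =
      √(2 * Real.pi / l) *
        ∑ n ∈ range N, PowerSeries.coeff (2 * n) G * (2 * (n + k) - 1)‼ / l ^ (n + k) := by
  simp only [pow_mul_trunc_mul_eq_sum]
  rw [integral_finsetSum _ fun j _ =>
    (integrable_pow_mul_exp_neg_mul_sq_div_two hl (2 * k + j)).const_mul _, sum_range_two_mul,
    mul_sum]
  refine sum_congr rfl fun n _ => ?_
  rw [integral_const_mul, integral_const_mul, ← add_assoc, ← mul_add, add_comm k n,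
    integral_odd_pow_mul_exp_neg_mul_sq_div_two, integral_even_pow_mul_exp_neg_mul_sq_div_two hl]
  ring

end GaussianMoments

section LaplaceCoefficients

open MeasureTheory
open scoped Nat PowerSeries

/-- The formal power series `G ^ ρ = ∑ₖ C(ρ, k) (G - 1) ^ k` for `G` with constant term `1`; then
the coefficient of `X ^ n` only involves `k ≤ n`, which is how the sum is cut off here. -/
noncomputable def powerSeriesRpow (G : ℝ⟦X⟧) (ρ : ℝ) : ℝ⟦X⟧ :=
  PowerSeries.mk fun n => ∑ k ∈ range (n + 1), gbinomR ρ k * PowerSeries.coeff n ((G - 1) ^ k)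

/-- The coefficient of `l ^ (-n)` in the asymptotic expansion, relative to `√(2π/l)`, of the
integral of `exp (-l f)` where `f x ~ (x² / 2) G x` at `0`; here `(2n - 1)‼ = (2n)! / (2ⁿ n!)`. -/
noncomputable def laplaceCoeff (G : ℝ⟦X⟧) (n : ℕ) : ℝ :=
  (2 * n - 1)‼ * PowerSeries.coeff (2 * n) (powerSeriesRpow G (-((n : ℝ) + 1 / 2)))

lemma coeff_pow_eq_zero {R : Type*} [CommRing R] {H : R⟦X⟧} (hH : PowerSeries.constantCoeff H = 0)
    {j k : ℕ} (hjk : j < k) : PowerSeries.coeff j (H ^ k) = 0 :=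
  PowerSeries.X_pow_dvd_iff.mp (pow_dvd_pow_of_dvd (PowerSeries.X_dvd_iff.mpr hH) k) j hjk

lemma coeff_powerSeriesRpow {G : ℝ⟦X⟧} (hG : PowerSeries.constantCoeff G = 1) (ρ : ℝ) {n K : ℕ}
    (hnK : n < K) : PowerSeries.coeff n (powerSeriesRpow G ρ) =
      ∑ k ∈ range K, gbinomR ρ k * PowerSeries.coeff n ((G - 1) ^ k) := by
  rw [powerSeriesRpow, PowerSeries.coeff_mk]
  refine sum_subset (range_subset_range.mpr hnK) fun k _ hk => ?_
  rw [coeff_pow_eq_zero (by simp [hG]) (by simpa using hk), mul_zero]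

lemma gbinomR_succ (ρ : ℝ) (k : ℕ) : gbinomR ρ (k + 1) = gbinomR ρ k * (ρ - k) / (k + 1) := by
  rw [gbinomR, gbinomR, prod_range_succ, Nat.factorial_succ]
  push_cast
  field_simp

lemma doubleFactorial_two_mul_succ_sub_one (n : ℕ) :
    (2 * (n + 1) - 1)‼ = (2 * n + 1) * (2 * n - 1)‼ := by
  rw [show 2 * (n + 1) - 1 = 2 * n + 1 by omega, Nat.doubleFactorial_add_one]

lemma doubleFactorial_mul_gbinomR (n k : ℕ) :
    (2 * n - 1)‼ * gbinomR (-((n : ℝ) + 1 / 2)) k =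
      (-(1 / 2)) ^ k / k ! * (2 * (n + k) - 1)‼ := by
  induction k with
  | zero => simp [gbinomR]
  | succ k ih =>
    rw [gbinomR_succ, ← add_assoc, doubleFactorial_two_mul_succ_sub_one, mul_div_assoc,
      ← mul_assoc, ih, Nat.factorial_succ, pow_succ]
    push_cast
    field_simp
    ring

lemma laplaceCoeff_eq_sum {G : ℝ⟦X⟧} (hG : PowerSeries.constantCoeff G = 1) {n K : ℕ}
    (hnK : 2 * n < K) : laplaceCoeff G n = ∑ k ∈ range K,
      (-(1 / 2) : ℝ) ^ k / k ! * PowerSeries.coeff (2 * n) ((G - 1) ^ k) * (2 * (n + k) - 1)‼ := by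
  rw [laplaceCoeff, coeff_powerSeriesRpow hG _ hnK, mul_sum]
  refine sum_congr rfl fun k _ => ?_
  rw [← mul_assoc, doubleFactorial_mul_gbinomR]
  ring

/-- The Gaussian `exp (-l x² / 2)` times the Taylor polynomial in `t = G x - 1` of
`exp (-(l x² / 2) t)`, with each power `t ^ k` truncated as a series in `x`. -/
noncomputable def laplaceApprox (G : ℝ⟦X⟧) (N : ℕ) (l x : ℝ) : ℝ :=
  Real.exp (-(l * x ^ 2 / 2)) * ∑ k ∈ range (2 * N),
    (-(l * x ^ 2 / 2)) ^ k / k ! * (((G - 1) ^ k).trunc (2 * N)).eval x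

lemma laplaceApprox_eq_sum (G : ℝ⟦X⟧) (N : ℕ) (l x : ℝ) :
    laplaceApprox G N l x = ∑ k ∈ range (2 * N), (-(1 / 2)) ^ k / k ! * l ^ k *
      (x ^ (2 * k) * (((G - 1) ^ k).trunc (2 * N)).eval x * Real.exp (-(l * x ^ 2 / 2))) := by
  rw [laplaceApprox, mul_sum]
  refine sum_congr rfl fun k _ => ?_
  rw [show -(l * x ^ 2 / 2) = -(1 / 2) * l * x ^ 2 by ring, mul_pow, mul_pow, pow_mul]
  ring

lemma integrable_laplaceApprox (G : ℝ⟦X⟧) (N : ℕ) {l : ℝ} (hl : 0 < l) :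
    Integrable (laplaceApprox G N l) := by
  simp only [funext (laplaceApprox_eq_sum G N l)]
  exact integrable_finsetSum _ fun k _ =>
    (integrable_pow_mul_trunc_mul_exp_neg_mul_sq_div_two hl (2 * k) _ _).const_mul _

lemma integral_laplaceApprox {G : ℝ⟦X⟧} (hG : PowerSeries.constantCoeff G = 1) (N : ℕ) {l : ℝ}
    (hl : 0 < l) : ∫ x, laplaceApprox G N l x =
      √(2 * Real.pi / l) * ∑ n ∈ range N, laplaceCoeff G n / l ^ n := by
  simp only [laplaceApprox_eq_sum]
  rw [integral_finsetSum _ fun k _ =>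
    (integrable_pow_mul_trunc_mul_exp_neg_mul_sq_div_two hl (2 * k) _ _).const_mul _]
  simp only [integral_const_mul, integral_even_pow_mul_trunc_mul_exp_neg_mul_sq_div_two hl, mul_sum]
  rw [sum_comm]
  refine sum_congr rfl fun n hn => ?_
  rw [laplaceCoeff_eq_sum hG (by simpa using hn : 2 * n < 2 * N), sum_div, mul_sum]
  refine sum_congr rfl fun k _ => ?_
  rw [pow_add]
  field_simp

end LaplaceCoefficients

section LaplaceMethod

open MeasureTheory
open scoped Nat Topology PowerSeries

lemma exists_abs_exp_sub_gaussian_sum_le {g : ℝ → ℝ}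
    (hg : (fun x => g x - 1) =O[𝓝[≠] 0] fun x => x) (N : ℕ) :
    ∃ C, 0 ≤ C ∧ ∀ᶠ x in 𝓝[≠] 0, ∀ l, 0 < l →
      |Real.exp (-(l * x ^ 2 / 2 * g x)) - Real.exp (-(l * x ^ 2 / 2)) *
          ∑ k ∈ range (2 * N), (-(l * x ^ 2 / 2)) ^ k / k ! * (g x - 1) ^ k| ≤
        C * ((l ^ N)⁻¹ * (1 + l * x ^ 2 / 2)⁻¹) := by
  obtain ⟨A, hA⟩ := hg.bound
  obtain ⟨D, hD₀, hD⟩ := exists_pow_mul_exp_neg_le (3 * N) (c := 1 / 2) (by norm_num)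
  have h_small : ∀ᶠ x in 𝓝[≠] (0 : ℝ), |g x - 1| ≤ 1 / 2 := by
    have h_tendsto := (hg.trans_tendsto (tendsto_id.mono_left nhdsWithin_le_nhds)).abs
    rw [abs_zero] at h_tendsto
    exact h_tendsto.eventually_le_const (by norm_num)
  refine ⟨(2 * A ^ 2) ^ N * D, by positivity, ?_⟩
  filter_upwards [hA, h_small] with x hx_le hx_half l hl
  have h_pow : |g x - 1| ^ (2 * N) ≤ A ^ (2 * N) * |x| ^ (2 * N) := by
    rw [← mul_pow]
    exact pow_le_pow_left₀ (abs_nonneg _) hx_le _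
  rw [abs_pow_two_mul_eq hl.ne' x] at h_pow
  have hu : 0 ≤ l * x ^ 2 / 2 := by positivity
  have h_taylor := abs_exp_neg_mul_one_add_sub_sum_le hu hx_half (2 * N)
  rw [add_sub_cancel] at h_taylor
  refine h_taylor.trans ?_
  generalize l * x ^ 2 / 2 = u at h_pow hu
  calc (u * |g x - 1|) ^ (2 * N) * Real.exp (-(u / 2))
      ≤ u ^ (2 * N) * (A ^ (2 * N) * (2 ^ N * (l ^ N)⁻¹ * u ^ N)) * Real.exp (-(u / 2)) := by
        rw [mul_pow]
        gcongr
    _ = (2 * A ^ 2) ^ N * (l ^ N)⁻¹ * (u ^ (3 * N) * Real.exp (-(1 / 2 * u))) := by ring_nf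
    _ ≤ (2 * A ^ 2) ^ N * (l ^ N)⁻¹ * (D * (1 + u)⁻¹) :=
        mul_le_mul_of_nonneg_left (hD u hu) (by positivity)
    _ = (2 * A ^ 2) ^ N * D * ((l ^ N)⁻¹ * (1 + u)⁻¹) := by ring

lemma HasAsymptoticSeries.exists_abs_exp_sub_laplaceApprox_le {g : ℝ → ℝ} {G : ℝ⟦X⟧}
    (hg : HasAsymptoticSeries g G) (hG : PowerSeries.constantCoeff G = 1) (N : ℕ) :
    ∃ C, 0 ≤ C ∧ ∀ᶠ x in 𝓝[≠] 0, ∀ l, 0 < l →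
      |Real.exp (-(l * x ^ 2 / 2 * g x)) - laplaceApprox G N l x| ≤
        C * ((l ^ N)⁻¹ * (1 + l * x ^ 2 / 2)⁻¹) := by
  have hg_sub : (fun x => g x - 1) =O[𝓝[≠] 0] fun x => x := by
    simpa only [hG] using hg.sub_constantCoeff_isBigO
  choose c hc₀ hc using fun k => ((hg.sub one).pow k (2 * N)).exists_nonneg
  obtain ⟨A, hA₀, hA⟩ := exists_abs_exp_sub_gaussian_sum_le hg_sub N
  obtain ⟨B, hB₀, hB⟩ := exists_abs_exp_mul_sum_le hc₀ (2 * N) N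
  have h_trunc : ∀ᶠ x in 𝓝[≠] (0 : ℝ), ∀ k ∈ range (2 * N),
      |(g x - 1) ^ k - (((G - 1) ^ k).trunc (2 * N)).eval x| ≤ c k * |x| ^ (2 * N) := by
    refine (eventually_all_finset _).mpr fun k _ => (hc k).bound.mono fun x hx => ?_
    simpa only [Real.norm_eq_abs, abs_pow] using hx
  refine ⟨A + B, by positivity, ?_⟩
  filter_upwards [hA, h_trunc] with x hxA hx_trunc l hl
  refine (abs_sub_le _ _ _).trans ((add_le_add (hxA l hl) ?_).trans_eq (add_mul _ _ _).symm)
  rw [laplaceApprox, ← mul_sub, ← sum_sub_distrib]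
  simp only [← mul_sub]
  exact hB l x hl _ hx_trunc

lemma exists_abs_laplaceApprox_le (G : ℝ⟦X⟧) (N : ℕ) {δ : ℝ} (hδ : 0 < δ) :
    ∃ C, 0 ≤ C ∧ ∀ x : ℝ, δ ≤ |x| → ∀ l, 0 < l →
      |laplaceApprox G N l x| ≤ C * ((l ^ N)⁻¹ * (1 + l * x ^ 2 / 2)⁻¹) := by
  choose c hc₀ hc using fun k => exists_norm_eval_trunc_le (2 * N) ((G - 1) ^ k) hδ
  obtain ⟨C, hC₀, hC⟩ := exists_abs_exp_mul_sum_le hc₀ (2 * N) N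
  exact ⟨C, hC₀, fun x hx l hl => hC l x hl _ fun k _ => hc k x hx⟩

lemma one_add_mul_sq_div_two {l : ℝ} (hl : 0 ≤ l) (x : ℝ) :
    1 + l * x ^ 2 / 2 = 1 + (√(l / 2) * x) ^ 2 := by
  rw [mul_pow, Real.sq_sqrt (by positivity)]
  ring

lemma integrable_inv_one_add_mul_sq_div_two {l : ℝ} (hl : 0 < l) :
    Integrable fun x : ℝ => (1 + l * x ^ 2 / 2)⁻¹ := by
  simp only [one_add_mul_sq_div_two hl.le]
  exact integrable_inv_one_add_sq.comp_mul_left' (by positivity)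

lemma integral_inv_one_add_mul_sq_div_two {l : ℝ} (hl : 0 < l) :
    ∫ x : ℝ, (1 + l * x ^ 2 / 2)⁻¹ = √(2 * Real.pi / l) * √Real.pi := by
  have h_sqrt : (√(l / 2))⁻¹ = √(2 / l) := by rw [← Real.sqrt_inv, inv_div]
  simp only [one_add_mul_sq_div_two hl.le]
  rw [Measure.integral_comp_mul_left (fun x : ℝ => (1 + x ^ 2)⁻¹), integral_univ_inv_one_add_sq,
    h_sqrt, abs_of_nonneg (by positivity), smul_eq_mul, mul_div_right_comm,
    Real.sqrt_mul (by positivity), mul_assoc, Real.mul_self_sqrt Real.pi_nonneg]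

variable {f : ℝ → ℝ} {S : Set ℝ} {G : ℝ⟦X⟧}

lemma exists_abs_indicator_sub_laplaceApprox_le (hS : S ∈ 𝓝 0)
    (hG : PowerSeries.constantCoeff G = 1)
    (hf : HasAsymptoticSeries (fun x => 2 * f x / x ^ 2) G)
    (hf_pos : ∀ δ > 0, ∃ η > 0, ∀ x ∈ S, δ ≤ |x| → η ≤ f x) (l₀ : ℝ) (N : ℕ) :
    ∃ C, ∃ η > 0, ∀ l, 0 < l → l₀ ≤ l → ∀ x ≠ 0,
      |S.indicator (fun x => Real.exp (-(l * f x))) x - laplaceApprox G N l x| ≤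
        C * ((l ^ N)⁻¹ * (1 + l * x ^ 2 / 2)⁻¹) +
          Real.exp (-η * (l - l₀)) * S.indicator (fun x => Real.exp (-(l₀ * f x))) x := by
  obtain ⟨A, hA₀, hA⟩ := hf.exists_abs_exp_sub_laplaceApprox_le hG N
  obtain ⟨δ, hδ, h_ball⟩ := Metric.mem_nhdsWithin_iff.mp
    (inter_mem hA (mem_nhdsWithin_of_mem_nhds hS))
  obtain ⟨η, hη, hfη⟩ := hf_pos δ hδ
  obtain ⟨B, hB₀, hB⟩ := exists_abs_laplaceApprox_le G N hδ
  refine ⟨A + B, η, hη, fun l hl hl₀ x hx => ?_⟩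
  have h_weight : 0 ≤ (l ^ N)⁻¹ * (1 + l * x ^ 2 / 2)⁻¹ := by positivity
  have h_tail : 0 ≤ Real.exp (-η * (l - l₀)) *
      S.indicator (fun x => Real.exp (-(l₀ * f x))) x :=
    mul_nonneg (Real.exp_nonneg _) (Set.indicator_nonneg (fun _ _ => Real.exp_nonneg _) _)
  rcases lt_or_ge |x| δ with h_near | h_far
  · obtain ⟨hxA, hxS⟩ := h_ball ⟨by simpa using h_near, hx⟩
    have h_exponent : l * x ^ 2 / 2 * (2 * f x / x ^ 2) = l * f x := by field_simp
    have h_bound := hxA l hl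
    rw [h_exponent] at h_bound
    rw [Set.indicator_of_mem hxS]
    nlinarith [mul_nonneg hB₀ h_weight]
  · have h_exp : |S.indicator (fun x => Real.exp (-(l * f x))) x| ≤ Real.exp (-η * (l - l₀)) *
        S.indicator (fun x => Real.exp (-(l₀ * f x))) x := by
      by_cases hxS : x ∈ S
      · rw [Set.indicator_of_mem hxS, Set.indicator_of_mem hxS, Real.abs_exp, ← Real.exp_add,
          Real.exp_le_exp]
        nlinarith [hfη x hxS h_far]
      · simp [hxS]
    refine (abs_sub _ _).trans ?_
    nlinarith [hB x h_far l hl, mul_nonneg hA₀ h_weight]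

variable {l₀ : ℝ}

lemma aestronglyMeasurable_exp_neg_mul (hl₀ : l₀ ≠ 0)
    (h_int : IntegrableOn (fun x => Real.exp (-(l₀ * f x))) S) (l : ℝ) :
    AEStronglyMeasurable (fun x => Real.exp (-(l * f x))) (volume.restrict S) := by
  have h_rpow (x : ℝ) : Real.exp (-(l₀ * f x)) ^ (l / l₀) = Real.exp (-(l * f x)) := by
    rw [← Real.exp_mul]
    congr 1
    field_simp
  simp only [← h_rpow]
  exact (h_int.aestronglyMeasurable.aemeasurable.pow_const _).aestronglyMeasurable

lemma exists_abs_setIntegral_exp_neg_mul_sub_le (hS_meas : MeasurableSet S) (hS : S ∈ 𝓝 0)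
    (hG : PowerSeries.constantCoeff G = 1)
    (hf : HasAsymptoticSeries (fun x => 2 * f x / x ^ 2) G)
    (hf_pos : ∀ δ > 0, ∃ η > 0, ∀ x ∈ S, δ ≤ |x| → η ≤ f x) (hl₀ : l₀ ≠ 0)
    (h_int : IntegrableOn (fun x => Real.exp (-(l₀ * f x))) S) (N : ℕ) :
    ∃ A B, ∃ η > 0, ∀ l, 0 < l → l₀ ≤ l →
      |(∫ x in S, Real.exp (-(l * f x))) -
          √(2 * Real.pi / l) * ∑ n ∈ range N, laplaceCoeff G n / l ^ n| ≤
        A * (√(2 * Real.pi / l) * (l ^ N)⁻¹) + B * Real.exp (-η * l) := by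
  obtain ⟨C, η, hη, hC⟩ := exists_abs_indicator_sub_laplaceApprox_le hS hG hf hf_pos l₀ N
  refine ⟨C * √Real.pi, Real.exp (η * l₀) * ∫ x in S, Real.exp (-(l₀ * f x)), η, hη,
    fun l hl hl₀_le => ?_⟩
  have h_weight := (integrable_inv_one_add_mul_sq_div_two hl).const_mul (l ^ N)⁻¹ |>.const_mul C
  have h_tail := (h_int.integrable_indicator hS_meas).const_mul (Real.exp (-η * (l - l₀)))
  have h_bound := (Measure.ae_ne volume (0 : ℝ)).mono fun x hx => hC l hl hl₀_le x hx
  have h_approx := integrable_laplaceApprox G N hl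
  have h_exp : Integrable (S.indicator fun x => Real.exp (-(l * f x))) := by
    have h_meas := (aestronglyMeasurable_indicator_iff hS_meas).mpr
      (aestronglyMeasurable_exp_neg_mul hl₀ h_int l)
    have h_diff := (h_weight.add h_tail).mono' (h_meas.sub h_approx.aestronglyMeasurable) h_bound
    simpa using h_diff.add h_approx
  rw [← integral_laplaceApprox hG N hl, ← integral_indicator hS_meas,
    ← integral_sub h_exp h_approx, ← Real.norm_eq_abs]
  refine (norm_integral_le_of_norm_le (h_weight.add h_tail) h_bound).trans_eq ?_
  have h_exp_split : Real.exp (-η * (l - l₀)) = Real.exp (η * l₀) * Real.exp (-η * l) := by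
    rw [← Real.exp_add]
    ring_nf
  simp only [Pi.add_apply]
  rw [integral_add h_weight h_tail]
  simp only [integral_const_mul]
  rw [integral_inv_one_add_mul_sq_div_two hl, integral_indicator hS_meas, h_exp_split]
  ring

theorem isBigO_setIntegral_exp_neg_mul_sub (hS_meas : MeasurableSet S) (hS : S ∈ 𝓝 0)
    (hG : PowerSeries.constantCoeff G = 1)
    (hf : HasAsymptoticSeries (fun x => 2 * f x / x ^ 2) G)
    (hf_pos : ∀ δ > 0, ∃ η > 0, ∀ x ∈ S, δ ≤ |x| → η ≤ f x) (hl₀ : l₀ ≠ 0)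
    (h_int : IntegrableOn (fun x => Real.exp (-(l₀ * f x))) S) (N : ℕ) :
    (fun l => (∫ x in S, Real.exp (-(l * f x))) -
        √(2 * Real.pi / l) * ∑ n ∈ range N, laplaceCoeff G n / l ^ n)
      =O[atTop] fun l => √(2 * Real.pi / l) * l ^ (-(N : ℝ)) := by
  obtain ⟨A, B, η, hη, h_bound⟩ :=
    exists_abs_setIntegral_exp_neg_mul_sub_le hS_meas hS hG hf hf_pos hl₀ h_int N
  have h_rpow : (fun l : ℝ => l ^ (-(1 / 2 : ℝ) - N)) =O[atTop]
      fun l => √(2 * Real.pi / l) * l ^ (-(N : ℝ)) := by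
    refine IsBigO.of_bound (√(2 * Real.pi))⁻¹ ((eventually_gt_atTop 0).mono fun l hl => ?_)
    rw [Real.sqrt_div (by positivity), sub_eq_add_neg, Real.rpow_add hl, Real.rpow_neg hl.le,
      ← Real.sqrt_eq_rpow, Real.norm_of_nonneg (by positivity),
      Real.norm_of_nonneg (by positivity)]
    refine le_of_eq ?_
    field_simp
  have h_tail : (fun l : ℝ => B * Real.exp (-η * l)) =O[atTop]
      fun l => √(2 * Real.pi / l) * l ^ (-(N : ℝ)) :=
    ((isLittleO_exp_neg_mul_rpow_atTop hη _).isBigO.trans h_rpow).const_mul_left B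
  refine IsBigO.trans ?_ (((isBigO_refl _ _).const_mul_left A).add h_tail)
  refine IsBigO.of_norm_eventuallyLE ?_
  filter_upwards [eventually_gt_atTop 0, eventually_ge_atTop l₀] with l hl hl₀_le
  rw [Real.rpow_neg hl.le, Real.rpow_natCast]
  exact h_bound l hl hl₀_le

end LaplaceMethod

section Gamma

open MeasureTheory
open scoped Nat Topology PowerSeries

lemma constantCoeff_F : PowerSeries.constantCoeff F = 1 := by
  simp [F, ← PowerSeries.coeff_zero_eq_constantCoeff_apply]

lemma sub_log_one_add_sub_sum_le {x : ℝ} (hx : |x| ≤ 1 / 2) (J : ℕ) :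
    |x - Real.log (1 + x) - x ^ 2 / 2 * (F.trunc J).eval x| ≤ 2 * |x| ^ (J + 2) := by
  have h_log := Real.abs_log_sub_add_sum_range_le (x := -x) (by rw [abs_neg]; linarith) (J + 1)
  have h_sum : ∑ i ∈ range (J + 1), (-x) ^ (i + 1) / ((i : ℝ) + 1) =
      -x + x ^ 2 / 2 * (F.trunc J).eval x := by
    rw [sum_range_succ', eval_trunc_eq_sum, mul_sum, add_comm]
    congr 1
    · simp
    · refine sum_congr rfl fun i _ => ?_
      rw [F, PowerSeries.coeff_mk, neg_pow x]
      push_cast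
      field_simp
      ring
  rw [h_sum, abs_neg, sub_neg_eq_add] at h_log
  rw [abs_sub_comm, show x ^ 2 / 2 * (F.trunc J).eval x - (x - Real.log (1 + x)) =
    -x + x ^ 2 / 2 * (F.trunc J).eval x + Real.log (1 + x) by ring]
  refine h_log.trans ((div_le_iff₀ (by linarith)).mpr ?_)
  nlinarith [pow_nonneg (abs_nonneg x) (J + 2)]

lemma hasAsymptoticSeries_sub_log_one_add :
    HasAsymptoticSeries (fun x => 2 * (x - Real.log (1 + x)) / x ^ 2) F := by
  intro J
  refine IsBigO.of_bound 4 ?_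
  have h_small : ∀ᶠ x in 𝓝[≠] (0 : ℝ), |x| ≤ 1 / 2 :=
    eventually_nhdsWithin_of_eventually_nhds <|
      (continuous_abs.tendsto' 0 0 abs_zero).eventually_le_const (by norm_num)
  filter_upwards [h_small, self_mem_nhdsWithin] with x hx hx₀
  have hx_ne : x ≠ 0 := hx₀
  have h_factor : 2 * (x - Real.log (1 + x)) / x ^ 2 - (F.trunc J).eval x =
      2 / x ^ 2 * (x - Real.log (1 + x) - x ^ 2 / 2 * (F.trunc J).eval x) := by
    field_simp
  rw [h_factor, Real.norm_eq_abs, Real.norm_eq_abs, abs_mul, abs_div, abs_pow, abs_pow,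
    Nat.abs_ofNat]
  calc 2 / |x| ^ 2 * |x - Real.log (1 + x) - x ^ 2 / 2 * (F.trunc J).eval x|
      ≤ 2 / |x| ^ 2 * (2 * |x| ^ (J + 2)) := by
        gcongr
        exact sub_log_one_add_sub_sum_le hx J
    _ = 4 * |x| ^ J := by
        field_simp
        ring

lemma sq_sqrt_sub_one_le_sub_log_one_add {x : ℝ} (hx : -1 < x) :
    (√(1 + x) - 1) ^ 2 ≤ x - Real.log (1 + x) := by
  have h_pos : 0 < 1 + x := by linarith
  have h_log := Real.log_le_sub_one_of_pos (Real.sqrt_pos.mpr h_pos)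
  rw [Real.log_sqrt h_pos.le] at h_log
  nlinarith [Real.sq_sqrt h_pos.le]

lemma exists_pos_le_sub_log_one_add {δ : ℝ} (hδ : 0 < δ) :
    ∃ η > 0, ∀ x ∈ Set.Ioi (-1 : ℝ), δ ≤ |x| → η ≤ x - Real.log (1 + x) := by
  refine ⟨min 1 (δ / 3) ^ 2, by positivity, fun x hx hδx => ?_⟩
  refine le_trans ?_ (sq_sqrt_sub_one_le_sub_log_one_add hx)
  rw [sq_le_sq, abs_of_pos (by positivity)]
  by_contra! h_lt
  obtain ⟨h_one, h_third⟩ := lt_min_iff.mp h_lt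
  have h_factor : x = (√(1 + x) - 1) * (√(1 + x) - 1 + 2) := by
    nlinarith [Real.sq_sqrt (show 0 ≤ 1 + x by linarith [Set.mem_Ioi.mp hx])]
  rw [h_factor, abs_mul] at hδx
  nlinarith [abs_add_le (√(1 + x) - 1) 2, abs_nonneg (√(1 + x) - 1), abs_two (α := ℝ)]

lemma measurePreserving_one_add_restrict_Ioi :
    MeasurePreserving (fun x : ℝ => 1 + x) (volume.restrict (Set.Ioi (-1)))
      (volume.restrict (Set.Ioi 0)) := by
  have h := (measurePreserving_add_left (volume : Measure ℝ) 1).restrict_preimage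
    (measurableSet_Ioi (a := (0 : ℝ)))
  simpa using h

lemma exp_neg_mul_sub_log_one_add {x : ℝ} (hx : -1 < x) (l : ℝ) :
    Real.exp (-(l * (x - Real.log (1 + x)))) =
      Real.exp l * (Real.exp (-(l * (1 + x))) * (1 + x) ^ l) := by
  rw [Real.rpow_def_of_pos (by linarith), ← Real.exp_add, ← Real.exp_add]
  ring_nf

lemma integrableOn_exp_neg_sub_log_one_add :
    IntegrableOn (fun x => Real.exp (-(1 * (x - Real.log (1 + x))))) (Set.Ioi (-1)) := by
  have h_gamma : IntegrableOn (fun t => Real.exp (-t) * t ^ (2 - 1 : ℝ)) (Set.Ioi 0) :=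
    Real.GammaIntegral_convergent two_pos
  have h_shift := (measurePreserving_one_add_restrict_Ioi.integrable_comp_of_integrable
    h_gamma).const_mul (Real.exp 1)
  refine h_shift.congr ?_
  filter_upwards [ae_restrict_mem measurableSet_Ioi] with x hx
  rw [exp_neg_mul_sub_log_one_add hx]
  norm_num

lemma gamma_eq_setIntegral_exp_neg_mul_sub_log {l : ℝ} (hl : 0 < l) :
    Real.Gamma l = l ^ l * Real.exp (-l) *
      ∫ x in Set.Ioi (-1), Real.exp (-(l * (x - Real.log (1 + x)))) := by
  have h_shift : ∫ x in Set.Ioi (-1), Real.exp (-(l * (x - Real.log (1 + x)))) =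
      Real.exp l * ∫ t in Set.Ioi 0, Real.exp (-(l * t)) * t ^ l := by
    rw [← integral_const_mul, ← measurePreserving_one_add_restrict_Ioi.integral_comp
      (measurableEmbedding_addLeft 1)]
    exact setIntegral_congr_fun measurableSet_Ioi fun x hx => exp_neg_mul_sub_log_one_add hx l
  have h_scale := Real.integral_rpow_mul_exp_neg_mul_Ioi (a := l + 1) (by positivity) hl
  rw [add_sub_cancel_right, Real.Gamma_add_one hl.ne', Real.div_rpow zero_le_one hl.le,
    Real.one_rpow, Real.rpow_add_one hl.ne'] at h_scale
  rw [h_shift]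
  simp only [mul_comm (Real.exp (-(l * _)))]
  rw [h_scale, Real.exp_neg]
  field_simp

lemma neg_one_pow_mul_stirlingCoeff (n : ℕ) :
    (-1) ^ n * stirlingCoeff n = laplaceCoeff F n := by
  have h_factorial : ((2 * n)! : ℝ) = (2 * n - 1)‼ * (2 ^ n * n !) := by
    rcases n with _ | n
    · simp
    · have h := Nat.factorial_eq_mul_doubleFactorial (2 * n + 1)
      rw [show 2 * n + 1 + 1 = 2 * (n + 1) by ring, Nat.doubleFactorial_two_mul] at h
      rw [show 2 * (n + 1) - 1 = 2 * n + 1 by omega, h]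
      push_cast
      ring
  have h_sign : ((-1 : ℝ) ^ n) * (-1) ^ n = 1 := by rw [← mul_pow]; norm_num
  have h_pow : Fpow (-((n : ℝ) + 1 / 2)) = powerSeriesRpow F (-((n : ℝ) + 1 / 2)) := rfl
  rw [stirlingCoeff, laplaceCoeff, h_factorial, h_pow, ← mul_assoc, ← mul_div_assoc, ← mul_assoc,
    h_sign, one_mul, mul_div_cancel_right₀ _ (by positivity)]

lemma rpow_mul_sqrt_two_pi_div {l : ℝ} (hl : 0 < l) :
    l ^ l * √(2 * Real.pi / l) = √(2 * Real.pi) * l ^ (l - 1 / 2) := by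
  rw [Real.sqrt_div (by positivity), Real.rpow_sub hl, ← Real.sqrt_eq_rpow]
  ring

lemma stirlingCoeff_zero : stirlingCoeff 0 = 1 := by
  norm_num [stirlingCoeff, Fpow, gbinomR]

lemma stirlingCoeff_one : stirlingCoeff 1 = -(1 / 12) := by
  norm_num [stirlingCoeff, Fpow, gbinomR, sum_range_succ, prod_range_succ, pow_succ,
    PowerSeries.coeff_mul, Finset.Nat.antidiagonal_succ, F, PowerSeries.coeff_one, Nat.factorial]

lemma stirlingCoeff_two : stirlingCoeff 2 = 1 / 288 := by
  norm_num [stirlingCoeff, Fpow, gbinomR, sum_range_succ, prod_range_succ, pow_succ,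
    PowerSeries.coeff_mul, Finset.Nat.antidiagonal_succ, F, PowerSeries.coeff_one, Nat.factorial]

end Gamma

/-- Stirling's asymptotic expansion of the gamma function: for every `N`, as `λ → +∞`,
`Γ(λ) = √(2π) λ^{λ-1/2} e^{-λ} (∑_{n=0}^{N-1} (-1)^n γ_n λ^{-n} + O(λ^{-N}))`, where
`γ_n` are the Stirling coefficients; in particular `γ₀ = 1`, `γ₁ = -1/12`, `γ₂ = 1/288`. -/
theorem gamma_stirling_expansion (N : ℕ) :
    ((fun l : ℝ =>
        Real.Gamma l -
          Real.sqrt (2 * Real.pi) * l ^ (l - 1 / 2) * Real.exp (-l) *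
            ∑ n ∈ Finset.range N, (-1 : ℝ) ^ n * stirlingCoeff n / l ^ n)
      =O[atTop] fun l : ℝ =>
        Real.sqrt (2 * Real.pi) * l ^ (l - 1 / 2) * Real.exp (-l) * l ^ (-(N : ℝ))) ∧
    stirlingCoeff 0 = 1 ∧ stirlingCoeff 1 = -(1 / 12) ∧ stirlingCoeff 2 = 1 / 288 := by
  refine ⟨?_, stirlingCoeff_zero, stirlingCoeff_one, stirlingCoeff_two⟩
  have h_laplace := isBigO_setIntegral_exp_neg_mul_sub measurableSet_Ioi
    (Ioi_mem_nhds neg_one_lt_zero) constantCoeff_F hasAsymptoticSeries_sub_log_one_add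
    (fun _ hδ => exists_pos_le_sub_log_one_add hδ) one_ne_zero
    integrableOn_exp_neg_sub_log_one_add N
  have h_scaled := (isBigO_refl (fun l : ℝ => l ^ l * Real.exp (-l)) atTop).mul h_laplace
  refine h_scaled.congr' ?_ ?_ <;> filter_upwards [eventually_gt_atTop 0] with l hl <;>
    rw [← rpow_mul_sqrt_two_pi_div hl]
  · rw [gamma_eq_setIntegral_exp_neg_mul_sub_log hl]
    simp only [neg_one_pow_mul_stirlingCoeff]
    ring
  · ring
end

section
/- For every positive integer m: e^{−m} Σ_{k=0}^{m−1} m^k/k! = (m^m e^{−m}/m!) ( −1 + m ∫_0^{+∞} e^{−m(x − log(1+x))} dx ). (The left-hand side equals Γ(m,m)/Γ(m), the normalized upper incomplete gamma function at equal arguments.) -/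
open MeasureTheory Real

/-!
The substitution `t = s (1 + x)` turns `∫ x in Ioi 0, exp (-s * (x - log (1 + x)))` into a multiple
of `Γ(s + 1, s)`, and the recurrence `Γ(s + 1, s) = s Γ(s, s) + s ^ s e ^ (-s)` converts this into
`Γ(s, s)`; the boundary term is the `-1` of the formula. When `s` is an integer, iterating the same
recurrence down to `Γ(1, x) = e ^ (-x)` expresses `Γ(s, x) / Γ(s)` as a truncated exponential sum.
-/

open Filter Set Topology

/-- The upper incomplete gamma function `Γ(s, x)`, with the same integrand as
`Real.Gamma_eq_integral`. It has its usual meaning for `0 < x`, and for `x = 0 < s`. -/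
noncomputable def upperIncompleteGamma (s x : ℝ) : ℝ :=
  ∫ t in Ioi x, exp (-t) * t ^ (s - 1)

theorem upperIncompleteGamma_one (x : ℝ) : upperIncompleteGamma 1 x = exp (-x) := by
  simp only [upperIncompleteGamma, sub_self, rpow_zero, mul_one, integral_exp_neg_Ioi]

theorem hasDerivAt_neg_exp_neg_mul_rpow (s : ℝ) {t : ℝ} (ht : t ≠ 0) :
    HasDerivAt (fun t : ℝ => -(exp (-t) * t ^ s))
      (exp (-t) * t ^ s - s * (exp (-t) * t ^ (s - 1))) t :=
  ((hasDerivAt_neg t).exp.mul (hasDerivAt_rpow_const (Or.inl ht))).neg.congr_deriv (by ring)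

theorem integrableOn_Ioi_exp_neg_mul_rpow {s x : ℝ} (hs : 0 < s) (hx : 0 ≤ x) :
    IntegrableOn (fun t : ℝ => exp (-t) * t ^ (s - 1)) (Ioi x) :=
  (GammaIntegral_convergent hs).mono_set (Ioi_subset_Ioi hx)

theorem upperIncompleteGamma_add_one {s x : ℝ} (hs : 0 < s) (hx : 0 ≤ x) :
    upperIncompleteGamma (s + 1) x = s * upperIncompleteGamma s x + exp (-x) * x ^ s := by
  have integrable_succ : IntegrableOn (fun t : ℝ => exp (-t) * t ^ s) (Ioi x) := by
    simpa only [add_sub_cancel_right] using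
      integrableOn_Ioi_exp_neg_mul_rpow (add_pos hs one_pos) hx
  have integrable := (integrableOn_Ioi_exp_neg_mul_rpow hs hx).const_mul s
  have continuous : Continuous fun t : ℝ => -(exp (-t) * t ^ s) :=
    ((continuous_exp.comp continuous_neg).mul (continuous_rpow_const hs.le)).neg
  have tendsto_zero : Tendsto (fun t : ℝ => -(exp (-t) * t ^ s)) atTop (𝓝 0) := by
    simpa only [neg_mul, one_mul, mul_comm (exp _), neg_zero] using
      (tendsto_rpow_mul_exp_neg_mul_atTop_nhds_zero s 1 one_pos).neg
  have integral_deriv := integral_Ioi_of_hasDerivAt_of_tendsto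
    continuous.continuousWithinAt
    (fun t ht => hasDerivAt_neg_exp_neg_mul_rpow s (hx.trans_lt ht).ne')
    (integrable_succ.sub integrable) tendsto_zero
  rw [integral_sub integrable_succ integrable, integral_const_mul] at integral_deriv
  simp only [upperIncompleteGamma, add_sub_cancel_right]
  linarith

theorem upperIncompleteGamma_nat_div_Gamma {m : ℕ} (hm : 0 < m) {x : ℝ} (hx : 0 ≤ x) :
    upperIncompleteGamma m x / Gamma m =
      exp (-x) * ∑ k ∈ Finset.range m, x ^ k / (k.factorial : ℝ) := by
  induction m, hm using Nat.le_induction with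
  | base => simp [upperIncompleteGamma_one]
  | succ n hn ih =>
    have hn' : (0 : ℝ) < n := by exact_mod_cast hn
    calc upperIncompleteGamma ↑(n + 1) x / Gamma ↑(n + 1)
        = upperIncompleteGamma n x / Gamma n + exp (-x) * x ^ n / Gamma (n + 1) := by
          rw [Nat.cast_succ, upperIncompleteGamma_add_one hn' hx, rpow_natCast, add_div,
            Gamma_add_one hn'.ne', mul_div_mul_left _ _ hn'.ne']
      _ = exp (-x) * ∑ k ∈ Finset.range (n + 1), x ^ k / (k.factorial : ℝ) := by
          rw [ih, Gamma_nat_eq_factorial, Finset.sum_range_succ, mul_add, mul_div_assoc]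

theorem setIntegral_Ioi_comp_add_left {E : Type*} [NormedAddCommGroup E] [NormedSpace ℝ E]
    (g : ℝ → E) (a c : ℝ) : ∫ x in Ioi a, g (c + x) = ∫ x in Ioi (c + a), g x := by
  simpa only [preimage_const_add_Ioi, add_sub_cancel_left] using
    (measurePreserving_add_left volume c).setIntegral_preimage_emb
      (measurableEmbedding_addLeft c) g (Ioi (c + a))

theorem exp_neg_mul_sub_log_one_add_s17 {s x : ℝ} (hs : 0 < s) (hx : -1 < x) :
    exp (-s * (x - log (1 + x))) =
      exp s / s ^ s * (exp (-(s * (1 + x))) * (s * (1 + x)) ^ s) := by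
  have hx' : 0 < 1 + x := by linarith
  have hss : s ^ s ≠ 0 := (rpow_pos_of_pos hs s).ne'
  calc exp (-s * (x - log (1 + x)))
      = exp s * exp (-(s * (1 + x))) * (1 + x) ^ s := by
        rw [rpow_def_of_pos hx', ← exp_add, ← exp_add]
        ring_nf
    _ = exp s / s ^ s * (exp (-(s * (1 + x))) * (s * (1 + x)) ^ s) := by
        rw [mul_rpow hs.le hx'.le]
        field_simp

theorem integral_exp_neg_mul_sub_log_one_add {s : ℝ} (hs : 0 < s) :
    ∫ x in Ioi (0 : ℝ), exp (-s * (x - log (1 + x))) =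
      exp s / s ^ (s + 1) * upperIncompleteGamma (s + 1) s := by
  calc ∫ x in Ioi (0 : ℝ), exp (-s * (x - log (1 + x)))
      = ∫ x in Ioi (0 : ℝ), exp s / s ^ s * (exp (-(s * (1 + x))) * (s * (1 + x)) ^ s) :=
        setIntegral_congr_fun measurableSet_Ioi fun _ hx =>
          exp_neg_mul_sub_log_one_add_s17 hs (neg_one_lt_zero.trans hx)
    _ = exp s / s ^ s * ∫ u in Ioi (1 : ℝ), exp (-(s * u)) * (s * u) ^ s := by
        rw [integral_const_mul,
          setIntegral_Ioi_comp_add_left (fun u => exp (-(s * u)) * (s * u) ^ s), add_zero]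
    _ = exp s / s ^ s * (s⁻¹ * ∫ t in Ioi s, exp (-t) * t ^ s) := by
        rw [integral_comp_mul_left_Ioi (fun t => exp (-t) * t ^ s) 1 hs, mul_one, smul_eq_mul]
    _ = exp s / s ^ (s + 1) * upperIncompleteGamma (s + 1) s := by
        rw [upperIncompleteGamma, add_sub_cancel_right, rpow_add_one hs.ne', ← mul_assoc,
          ← div_eq_mul_inv, div_div]

theorem incompleteGamma_ratio_eq_general {s : ℝ} (hs : 0 < s) :
    upperIncompleteGamma s s / Gamma s =
      s ^ s * exp (-s) / Gamma (s + 1) *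
        (-1 + s * ∫ x in Ioi (0 : ℝ), exp (-s * (x - log (1 + x)))) := by
  have hss : s ^ s ≠ 0 := (rpow_pos_of_pos hs s).ne'
  have hΓ : Gamma s ≠ 0 := (Gamma_pos_of_pos hs).ne'
  rw [integral_exp_neg_mul_sub_log_one_add hs, upperIncompleteGamma_add_one hs hs.le,
    Gamma_add_one hs.ne', rpow_add_one hs.ne', exp_neg]
  field_simp
  ring

/-- For every positive integer `m`,
`e^{-m} ∑_{k=0}^{m-1} m^k/k! = (m^m e^{-m}/m!)(-1 + m ∫_0^∞ e^{-m(x - log(1+x))} dx)`.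
The left-hand side equals `Γ(m,m)/Γ(m)`, the normalized upper incomplete gamma function
at equal arguments. -/
theorem incompleteGamma_ratio_eq (m : ℕ) (hm : 0 < m) :
    Real.exp (-(m : ℝ)) * ∑ k ∈ Finset.range m, (m : ℝ) ^ k / (Nat.factorial k : ℝ) =
      ((m : ℝ) ^ m * Real.exp (-(m : ℝ)) / (Nat.factorial m : ℝ)) *
        (-1 + (m : ℝ) *
          ∫ x in Set.Ioi (0 : ℝ), Real.exp (-(m : ℝ) * (x - Real.log (1 + x)))) := by
  rw [← upperIncompleteGamma_nat_div_Gamma hm m.cast_nonneg,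
    incompleteGamma_ratio_eq_general (Nat.cast_pos.2 hm), rpow_natCast, Gamma_nat_eq_factorial]
end

section
/- For all integers n ≥ 0 and 0 ≤ k ≤ 2n, the coefficient q_k^{(n)} := ((2n)!/(2^n n!)) · [x^k] F^{−(n+1/2)} (so that the polynomial Q_n(μ) = Σ_{k=0}^{2n} q_k^{(n)} μ^k arising in the uniform asymptotic expansion of the incomplete gamma function has these coefficients) satisfies q_k^{(n)} = Σ_{j=0}^k ((−1)^k 2^{n+j+1} Γ(n+k+3/2) / (√π (2n+2j+1)(k−j)!)) Σ_{i=0}^j ((−1)^i s(k+j+i, i)/((j−i)! (k+j+i)!)). -/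
open Finset

/-- The coefficients `q_k^{(n)} = ((2n)!/(2^n n!)) [x^k] F^{-(n+1/2)}` of the polynomials
`Q_n(μ)` arising in the uniform asymptotic expansion of the incomplete gamma function. -/
noncomputable def q (n k : ℕ) : ℝ :=
  ((Nat.factorial (2 * n) : ℝ) / (2 ^ n * (Nat.factorial n : ℝ))) *
    PowerSeries.coeff k (Fpow (-((n : ℝ) + 1 / 2)))

/-!
`F^ρ` is a binomial series in powers of `F - 1`. Truncating it at order `k` leaves the coefficient
of `x^k` unchanged and makes it a polynomial in `F`, whose coefficients collapse to products of two
binomial coefficients. Thus only the natural powers `F^j` are needed. As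
`x² F = 2 (x - log (1 + x))`, these expand in powers of `log (1 + x)`, whose coefficients are,
up to factorials, the signed Stirling numbers of the first kind. At `ρ = -(n + 1/2)` the binomial
coefficients are quotients of Gamma values, and so is `(2n)! / (2^n n!)`, up to a power of `2`, by
Legendre's duplication formula.
-/

section BinomialSeries

lemma sub_one_pow_eq_sum_smul_pow (R : Type*) {A : Type*} [CommRing R] [Ring A] [Algebra R A]
    (g : A) {l k : ℕ} (hl : l ≤ k) :
    (g - 1) ^ l = ∑ j ∈ range (k + 1), ((-1) ^ (l + j) * (l.choose j : R)) • g ^ j := by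
  have hlk : range (l + 1) ⊆ range (k + 1) := range_subset_range.2 (Nat.succ_le_succ hl)
  rw [sub_eq_add_neg, (Commute.one_right g).neg_right.add_pow]
  refine (sum_congr rfl fun j hj ↦ ?_).trans (sum_subset hlk fun j _ hj ↦ ?_)
  · obtain ⟨m, rfl⟩ := Nat.exists_eq_add_of_le (mem_range_succ_iff.1 hj)
    rw [Nat.add_sub_cancel_left, add_right_comm, pow_add _ (j + j), Even.neg_one_pow ⟨j, rfl⟩,
      one_mul, mul_assoc, Algebra.smul_def, Algebra.commutes]
    simp
  · rw [Nat.choose_eq_zero_of_lt (by simpa using hj), Nat.cast_zero, mul_zero, zero_smul]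

variable {R : Type*} [CommRing R] [BinomialRing R]

lemma choose_neg_eq_neg_one_pow_mul_multichoose (r : R) (n : ℕ) :
    Ring.choose (-r) n = (-1) ^ n * Ring.multichoose r n := by
  rw [Ring.choose_neg', Int.negOnePow_def]
  simp [Units.smul_def]

lemma sum_range_neg_one_pow_mul_choose (r : R) (m : ℕ) :
    ∑ t ∈ range (m + 1), (-1) ^ t * Ring.choose r t = (-1) ^ m * Ring.choose (r - 1) m := by
  induction m with
  | zero => simp
  | succ m ih =>
    have pascal : Ring.choose r (m + 1) = Ring.choose (r - 1) m + Ring.choose (r - 1) (m + 1) := by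
      rw [← Ring.choose_succ_succ, sub_add_cancel]
    rw [sum_range_succ, ih, pascal]
    ring

lemma sum_range_choose_mul_neg_one_pow_mul_natChoose (r : R) {j k : ℕ} (hj : j ≤ k) :
    ∑ l ∈ range (k + 1), Ring.choose r l * ((-1) ^ (l + j) * l.choose j) =
      (-1) ^ (k - j) * Ring.choose r j * Ring.choose (r - j - 1) (k - j) := by
  obtain ⟨m, rfl⟩ := Nat.exists_eq_add_of_le hj
  have vanish : ∀ l ∈ range j, Ring.choose r l * ((-1) ^ (l + j) * l.choose j) = 0 := fun l hl ↦ by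
    rw [Nat.choose_eq_zero_of_lt (mem_range.1 hl), Nat.cast_zero, mul_zero, mul_zero]
  have trinomial (t : ℕ) : Ring.choose r (j + t) * ((-1) ^ (j + t + j) * (j + t).choose j) =
      Ring.choose r j * ((-1) ^ t * Ring.choose (r - j) t) := by
    have h := Ring.choose_smul_choose r (Nat.le_add_right j t)
    rw [Nat.add_sub_cancel_left, nsmul_eq_mul] at h
    rw [add_right_comm, pow_add, Even.neg_one_pow ⟨j, rfl⟩]
    linear_combination (-1) ^ t * h
  rw [add_assoc, sum_range_add, sum_eq_zero vanish, zero_add, sum_congr rfl fun t _ ↦ trinomial t,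
    ← mul_sum, sum_range_neg_one_pow_mul_choose, Nat.add_sub_cancel_left]
  ring

theorem sum_range_choose_smul_sub_one_pow {A : Type*} [Ring A] [Algebra R A]
    (r : R) (g : A) (k : ℕ) :
    ∑ l ∈ range (k + 1), Ring.choose r l • (g - 1) ^ l =
      ∑ j ∈ range (k + 1),
        ((-1) ^ (k - j) * Ring.choose r j * Ring.choose (r - j - 1) (k - j)) • g ^ j := by
  have expand : ∀ l ∈ range (k + 1), Ring.choose r l • (g - 1) ^ l = ∑ j ∈ range (k + 1),
      Ring.choose r l • ((-1) ^ (l + j) * (l.choose j : R)) • g ^ j := fun l hl ↦ by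
    rw [sub_one_pow_eq_sum_smul_pow R g (mem_range_succ_iff.1 hl), smul_sum]
  rw [sum_congr rfl expand, sum_comm]
  refine sum_congr rfl fun j hj ↦ ?_
  rw [← sum_range_choose_mul_neg_one_pow_mul_natChoose r (mem_range_succ_iff.1 hj), sum_smul]
  simp only [mul_smul]

end BinomialSeries

section Gamma

lemma Gamma_add_natCast {a : ℝ} (ha : ∀ m : ℕ, a ≠ -m) (n : ℕ) :
    Real.Gamma (a + n) = (ascPochhammer ℝ n).eval a * Real.Gamma a := by
  induction n with
  | zero => simp
  | succ n ih =>
    have hn : a + n ≠ 0 := mt eq_neg_of_add_eq_zero_left (ha n)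
    rw [ascPochhammer_succ_eval, Nat.cast_succ, ← add_assoc, Real.Gamma_add_one hn, ih]
    ring

lemma multichoose_eq_Gamma_div {a : ℝ} (ha : ∀ m : ℕ, a ≠ -m) (n : ℕ) :
    Ring.multichoose a n = Real.Gamma (a + n) / (Real.Gamma a * n.factorial) := by
  have hΓ : Real.Gamma a ≠ 0 := Real.Gamma_ne_zero ha
  have h := Ring.factorial_nsmul_multichoose_eq_ascPochhammer a n
  rw [Polynomial.ascPochhammer_smeval_eq_eval, nsmul_eq_mul] at h
  rw [eq_div_iff (by positivity), Gamma_add_natCast ha, ← h]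
  ring

lemma factorial_two_mul_div_two_pow_mul_factorial (n : ℕ) :
    ((2 * n).factorial : ℝ) / (2 ^ n * n.factorial) =
      2 ^ n * Real.Gamma (n + 1 / 2) / Real.sqrt Real.pi := by
  have duplication := Real.Gamma_mul_Gamma_add_half (n + 1 / 2)
  have two_rpow : (2 : ℝ) ^ (1 - 2 * ((n : ℝ) + 1 / 2)) = (2 ^ n * 2 ^ n)⁻¹ := by
    rw [show 1 - 2 * ((n : ℝ) + 1 / 2) = -((n + n : ℕ) : ℝ) by push_cast; ring,
      Real.rpow_neg zero_le_two, Real.rpow_natCast, pow_add]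
  rw [two_rpow, show (n : ℝ) + 1 / 2 + 1 / 2 = n + 1 by ring,
    show 2 * ((n : ℝ) + 1 / 2) = (2 * n : ℕ) + 1 by push_cast; ring,
    Real.Gamma_nat_eq_factorial, Real.Gamma_nat_eq_factorial] at duplication
  field_simp at duplication ⊢
  linear_combination -duplication

end Gamma

section PowerSeries

open PowerSeries

lemma coeff_X_sub_pow {R : Type*} [CommRing R] (G : R⟦X⟧) (d j : ℕ) :
    coeff (d + j) ((X - G) ^ j) =
      ∑ i ∈ range (j + 1), (-1) ^ i * j.choose i * coeff (d + i) (G ^ i) := by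
  rw [sub_eq_neg_add, add_pow, map_sum]
  refine sum_congr rfl fun i hi ↦ ?_
  have hij : i ≤ j := mem_range_succ_iff.1 hi
  have term : (-G) ^ i * X ^ (j - i) * (j.choose i : R⟦X⟧) =
      X ^ (j - i) * (C ((-1) ^ i * (j.choose i : R)) * G ^ i) := by
    rw [neg_pow, map_mul, map_pow, map_neg, map_one, map_natCast]
    ring
  rw [term, show d + j = d + i + (j - i) by lia, coeff_X_pow_mul, coeff_C_mul]

section Log

variable {A : Type*} [CommRing A] [Algebra ℚ A]

lemma one_add_X_mul_derivative_log : (1 + X) * d⁄dX A (log A) = 1 := by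
  ext m
  rw [deriv_log, add_mul, one_mul, map_add]
  cases m with
  | zero => simp
  | succ m => simp [coeff_succ_X_mul, coeff_one, pow_succ]

lemma coeff_succ_log_pow_succ (m i : ℕ) :
    ((m : A) + 1) * coeff (m + 1) (log A ^ (i + 1)) + m * coeff m (log A ^ (i + 1)) =
      (i + 1) * coeff m (log A ^ i) := by
  have ode : (1 + X) * d⁄dX A (log A ^ (i + 1)) = C ((i : A) + 1) * log A ^ i := by
    rw [Derivation.leibniz_pow, Nat.add_sub_cancel, smul_eq_mul, nsmul_eq_mul, map_add, map_one,
      map_natCast]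
    push_cast
    linear_combination ((i : A⟦X⟧) + 1) * log A ^ i * one_add_X_mul_derivative_log (A := A)
  have h := congrArg (coeff m) ode
  rw [add_mul, one_mul, map_add, coeff_derivative, coeff_C_mul] at h
  cases m with
  | zero => simpa [mul_comm] using h
  | succ m =>
    rw [coeff_succ_X_mul, coeff_derivative] at h
    push_cast at h ⊢
    linear_combination h

theorem factorial_mul_coeff_log_pow (m i : ℕ) :
    (m.factorial : A) * coeff m (log A ^ i) =
      (-1) ^ (m + i) * i.factorial * Nat.stirlingFirst m i := by
  induction m generalizing i with
  | zero => cases i <;> simp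
  | succ m ih =>
    cases i with
    | zero => simp [coeff_one]
    | succ i =>
      rw [Nat.stirlingFirst_succ_succ]
      have h := ih (i + 1)
      simp only [Nat.factorial_succ] at h ⊢
      push_cast at h ⊢
      linear_combination (m.factorial : A) * coeff_succ_log_pow_succ (A := A) m i +
        ((i : A) + 1) * ih i - (m : A) * h

end Log

lemma X_sq_mul_F : X ^ 2 * F = C 2 * (X - log ℝ) := by
  ext m
  rw [coeff_X_pow_mul', coeff_C_mul, map_sub, coeff_X, coeff_log]
  obtain _ | _ | m := m
  · simp
  · simp
  · rw [if_pos (by lia), if_neg (by lia), if_neg (by lia), F, eq_ratCast,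
      show m + 1 + 1 - 2 = m from rfl, coeff_mk]
    push_cast
    ring

lemma stirling1_eq_stirlingFirst (m i : ℕ) : stirling1 m i = Nat.stirlingFirst m i := by
  induction m generalizing i with
  | zero => cases i <;> rfl
  | succ m ih =>
    cases i with
    | zero => rfl
    | succ i => rw [stirling1, ih, ih, Nat.stirlingFirst_succ_succ, add_comm]

theorem coeff_F_pow (k j : ℕ) :
    coeff k (F ^ j) = (-1) ^ (k + j) * 2 ^ j * j.factorial *
      ∑ i ∈ range (j + 1), (-1) ^ i * (stirling1 (k + j + i) i : ℝ) /
        ((j - i).factorial * (k + j + i).factorial) := by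
  have shift : coeff k (F ^ j) = 2 ^ j * coeff (k + j + j) ((X - log ℝ) ^ j) := by
    rw [← coeff_C_mul, map_pow C, ← mul_pow, ← X_sq_mul_F, mul_pow, ← pow_mul, add_assoc, ← two_mul,
      coeff_X_pow_mul]
  rw [shift, coeff_X_sub_pow, mul_sum, mul_sum]
  refine sum_congr rfl fun i hi ↦ ?_
  have hlog := factorial_mul_coeff_log_pow (A := ℝ) (k + j + i) i
  rw [add_assoc _ i, pow_add _ _ (i + i), Even.neg_one_pow ⟨i, rfl⟩, mul_one, mul_comm] at hlog
  rw [Nat.cast_choose ℝ (mem_range_succ_iff.1 hi), stirling1_eq_stirlingFirst,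
    eq_div_of_mul_eq (by positivity) hlog]
  field_simp

lemma gbinomR_eq_choose (ρ : ℝ) (k : ℕ) : gbinomR ρ k = Ring.choose ρ k := by
  rw [gbinomR, ← descPochhammer_eval_eq_prod_range, Ring.choose_eq_smul,
    ← Polynomial.aeval_eq_smeval, ← Polynomial.eval_map_algebraMap, descPochhammer_map, smul_eq_mul,
    div_eq_inv_mul]

theorem coeff_Fpow (ρ : ℝ) (k : ℕ) :
    coeff k (Fpow ρ) = ∑ j ∈ range (k + 1),
      (-1) ^ (k - j) * Ring.choose ρ j * Ring.choose (ρ - j - 1) (k - j) * coeff k (F ^ j) := by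
  have h := congrArg (coeff k) (sum_range_choose_smul_sub_one_pow ρ F k)
  simp only [map_sum, coeff_smul, smul_eq_mul] at h
  simpa only [Fpow, coeff_mk, gbinomR_eq_choose] using h

theorem coeff_Fpow_neg {a : ℝ} (ha : ∀ m : ℕ, a ≠ -m) (k : ℕ) :
    coeff k (Fpow (-a)) = ∑ j ∈ range (k + 1),
      (-1) ^ j * Real.Gamma (a + k + 1) /
        (Real.Gamma a * (a + j) * j.factorial * (k - j).factorial) * coeff k (F ^ j) := by
  rw [coeff_Fpow]
  refine sum_congr rfl fun j hj ↦ ?_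
  congr 1
  have hjk : j ≤ k := mem_range_succ_iff.1 hj
  have hj0 : a + j ≠ 0 := mt eq_neg_of_add_eq_zero_left (ha j)
  have haj (m : ℕ) : a + j + 1 ≠ -m := fun h ↦ ha (j + 1 + m) (by push_cast; linarith)
  have hΓ : Real.Gamma a ≠ 0 := Real.Gamma_ne_zero ha
  have hΓj : Real.Gamma (a + j) ≠ 0 := by
    refine Real.Gamma_ne_zero fun m h ↦ ha (j + m) (by push_cast; linarith)
  rw [show -a - j - 1 = -(a + j + 1) by ring, choose_neg_eq_neg_one_pow_mul_multichoose,
    choose_neg_eq_neg_one_pow_mul_multichoose, multichoose_eq_Gamma_div ha,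
    multichoose_eq_Gamma_div haj, Nat.cast_sub hjk, Real.Gamma_add_one hj0,
    show a + j + 1 + ((k : ℝ) - j) = a + k + 1 by ring]
  field_simp
  rw [← pow_mul, pow_mul', neg_one_sq, one_pow, one_mul]

end PowerSeries

theorem q_eq_sum_stirling1_general (n k : ℕ) :
    q n k =
      ∑ j ∈ Finset.range (k + 1),
        ((-1 : ℝ) ^ k * 2 ^ (n + j + 1) * Real.Gamma ((n : ℝ) + k + 3 / 2) /
            (Real.sqrt Real.pi * (2 * (n : ℝ) + 2 * j + 1) * (Nat.factorial (k - j) : ℝ))) *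
          ∑ i ∈ Finset.range (j + 1),
            (-1 : ℝ) ^ i * (stirling1 (k + j + i) i : ℝ) /
              ((Nat.factorial (j - i) : ℝ) * (Nat.factorial (k + j + i) : ℝ)) := by
  have half_ne (m : ℕ) : (n : ℝ) + 1 / 2 ≠ -m := by
    have : 0 < (n : ℝ) + 1 / 2 + m := by positivity
    linarith
  rw [q, coeff_Fpow_neg half_ne, factorial_two_mul_div_two_pow_mul_factorial, mul_sum]
  refine sum_congr rfl fun j _ ↦ ?_
  have sign : (-1 : ℝ) ^ k = (-1) ^ j * (-1) ^ (k + j) := by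
    rw [← pow_add, add_left_comm, pow_add _ k, Even.neg_one_pow ⟨j, rfl⟩, mul_one]
  rw [coeff_F_pow, sign, show (n : ℝ) + 1 / 2 + k + 1 = n + k + 3 / 2 by ring]
  field_simp
  ring

/-- Explicit formula (31) for the coefficients of the polynomials `Q_n` in terms of the
unsigned Stirling numbers of the first kind. -/
theorem q_eq_sum_stirling1 (n k : ℕ) (hk : k ≤ 2 * n) :
    q n k =
      ∑ j ∈ Finset.range (k + 1),
        ((-1 : ℝ) ^ k * 2 ^ (n + j + 1) * Real.Gamma ((n : ℝ) + k + 3 / 2) /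
            (Real.sqrt Real.pi * (2 * (n : ℝ) + 2 * j + 1) * (Nat.factorial (k - j) : ℝ))) *
          ∑ i ∈ Finset.range (j + 1),
            (-1 : ℝ) ^ i * (stirling1 (k + j + i) i : ℝ) /
              ((Nat.factorial (j - i) : ℝ) * (Nat.factorial (k + j + i) : ℝ)) :=
  q_eq_sum_stirling1_general n k
end
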